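/- Let C be a small category, E = Psh(C), and let I⊗(−) : E → E be a functorial cylinder with endpoint inclusions δ⁰, δ¹ such that I⊗0 ≅ 0 (e.g., because I⊗(−) has a right adjoint) and such that δ⁰ is a cartesian natural transformation (all its naturality squares are pullbacks). Let M be a class of maps such that: every map 0 → X from the initial presheaf lies in M; M is stable under pullback; and M is closed under Leibniz product with δ⁰ (i ∈ M implies δ⁰ ⊗̂ i ∈ M). Then for every X ∈ E, the identity map id_X lies in M. -/

import Mathlib

/-!
Statement 14 (Lemma `identities-in-M`): in a presheaf category with a functorial
cylinder such that `I⊗0 ≅ 0` and `δ⁰` is cartesian, if a class of maps `M` contains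
all maps from the initial object, is stable under pullback, and is closed under
Leibniz product with `δ⁰`, then `M` contains all identities.
-/

open CategoryTheory Category Limits

universe u

namespace GS

/-- A functorial cylinder: an endofunctor with two endpoint inclusions. -/
structure Cylinder (E : Type*) [Category E] where
  I : E ⥤ E
  δ : Fin 2 → (𝟭 E ⟶ I)

variable {E : Type*} [Category E]

/-- The Leibniz (pushout) product of the endpoint inclusion `δ k` with a map `i`. -/
noncomputable def Cylinder.leibniz (Q : Cylinder E) [HasPushouts E]
    (k : Fin 2) {A B : E} (i : A ⟶ B) :
    pushout ((Q.δ k).app A) i ⟶ Q.I.obj B :=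
  pushout.desc (Q.I.map i) ((Q.δ k).app B) (by simpa using ((Q.δ k).naturality i).symm)

variable {C : Type u} [SmallCategory C]

theorem identities_mem (Q : Cylinder (Cᵒᵖ ⥤ Type u))
    -- `I⊗0 ≅ 0`
    (h0 : IsInitial (Q.I.obj (⊥_ (Cᵒᵖ ⥤ Type u))))
    -- `δ⁰` is a cartesian natural transformation
    (hcart : ∀ ⦃A B : Cᵒᵖ ⥤ Type u⦄ (f : A ⟶ B),
      IsPullback f ((Q.δ 0).app A) ((Q.δ 0).app B) (Q.I.map f))
    (M : MorphismProperty (Cᵒᵖ ⥤ Type u))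
    -- every map from the initial object lies in M
    (hinit : ∀ X : Cᵒᵖ ⥤ Type u, M (initial.to X))
    -- M is stable under pullback
    (hpb : ∀ ⦃A' A B' B : Cᵒᵖ ⥤ Type u⦄ (t : A' ⟶ A) (i' : A' ⟶ B') (i : A ⟶ B)
      (b : B' ⟶ B), IsPullback t i' i b → M i → M i')
    -- M is closed under Leibniz product with `δ⁰`
    (hleib : ∀ ⦃A B : Cᵒᵖ ⥤ Type u⦄ (i : A ⟶ B), M i → M (Q.leibniz 0 i)) :
    ∀ X : Cᵒᵖ ⥤ Type u, M (𝟙 X) := by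
  intro X
  -- `δ⁰_X` is a pullback of `δ⁰_1`, which is a mono since its source is terminal
  have hm : Mono ((Q.δ 0).app X) := by
    refine ⟨fun a b hab => ?_⟩
    exact (hcart (terminal.from X)).hom_ext (terminalIsTerminal.hom_ext _ _) hab
  have hiso : IsIso ((Q.δ 0).app (⊥_ (Cᵒᵖ ⥤ Type u))) :=
    isIso_of_isInitial initialIsInitial h0 _
  have hl := hleib _ (hinit X)
  have hinr : pushout.inr ((Q.δ 0).app (⊥_ (Cᵒᵖ ⥤ Type u))) (initial.to X) ≫
      Q.leibniz 0 (initial.to X) = (Q.δ 0).app X := by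
    unfold Cylinder.leibniz
    exact pushout.inr_desc _ _ _
  have hi : IsIso (pushout.inr ((Q.δ 0).app (⊥_ (Cᵒᵖ ⥤ Type u))) (initial.to X)) :=
    inferInstance
  have h1 : IsPullback (pushout.inr ((Q.δ 0).app (⊥_ (Cᵒᵖ ⥤ Type u))) (initial.to X))
      ((Q.δ 0).app X) (Q.leibniz 0 (initial.to X)) (𝟙 _) :=
    IsPullback.of_horiz_isIso ⟨by rw [hinr]; exact (comp_id _).symm⟩
  have h2 : IsPullback (𝟙 X) (𝟙 X) ((Q.δ 0).app X) ((Q.δ 0).app X) :=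
    IsKernelPair.id_of_mono _
  exact hpb _ _ _ _ h2 (hpb _ _ _ _ h1 hl)

end GS
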